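/- Let N_q, N_c ≥ 1, let h : {1,…,N_q} → ℝ with h_n > 0 for all n, set H_0 := −∑_n h_n Z_n, and let V_1,…,V_{N_c} ∈ 𝒫^{N_q}. Suppose Ψ : ℝ^{N_c} → ℂ^(2^{N_q}) and E : ℝ^{N_c} → ℝ are analytic near 0 with (H_0 + ∑_i J_i V_i)Ψ(J) = E(J)Ψ(J), ‖Ψ(J)‖ = 1, ⟨0|Ψ(J)⟩ real and positive, and Ψ(0) = |0⟩, and for each multi-index k let C_k be the (unique) real number with Taylor coefficient (1/k!)∂^k_J Ψ(0) = C_k V^{·k}|0⟩. If k = k_A + k_B where k_A, k_B ∈ ℕ^{N_c} are nonzero multi-indices with disjoint supports, then the perturbative contributions factorize: C_k = C_{k_A} · C_{k_B}. -/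

import Mathlib

open Matrix

/-- The single-qubit Pauli matrices `I, X, Y, Z`, indexed by `Fin 4`. -/
noncomputable def pauli1 : Fin 4 → Matrix (Fin 2) (Fin 2) ℂ :=
  ![1, !![0, 1; 1, 0], !![0, -Complex.I; Complex.I, 0], !![1, 0; 0, -1]]

/-- The `N`-qubit Pauli basis element with single-qubit factor `pauli1 (f n)` on qubit `n`. -/
noncomputable def pauliTensor {N : ℕ} (f : Fin N → Fin 4) :
    Matrix (Fin N → Fin 2) (Fin N → Fin 2) ℂ :=
  fun s t => ∏ n, pauli1 (f n) (s n) (t n)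

/-- The computational basis state `|s⟩`. -/
def ket {N : ℕ} (s : Fin N → Fin 2) : (Fin N → Fin 2) → ℂ :=
  fun t => if t = s then 1 else 0

/-- The partial derivative of `F` in the `i`-th coordinate direction. -/
noncomputable def pderiv {n : ℕ} {E : Type*} [NormedAddCommGroup E] [NormedSpace ℝ E]
    (i : Fin n) (F : (Fin n → ℝ) → E) : (Fin n → ℝ) → E :=
  fun J => fderiv ℝ F J (Pi.single i 1)

/-- The iterated partial derivative `∂^k F` for a multi-index `k`. -/
noncomputable def iterPDeriv {n : ℕ} {E : Type*} [NormedAddCommGroup E] [NormedSpace ℝ E]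
    (k : Fin n → ℕ) (F : (Fin n → ℝ) → E) : (Fin n → ℝ) → E :=
  (List.finRange n).foldr (fun i G => (pderiv i)^[k i] G) F

/-- The ordered power `V^{·k} = V_1^{k_1}·…·V_{N_c}^{k_{N_c}}`. -/
noncomputable def Vpow {Nq Nc : ℕ} (V : Fin Nc → Matrix (Fin Nq → Fin 2) (Fin Nq → Fin 2) ℂ)
    (k : Fin Nc → ℕ) : Matrix (Fin Nq → Fin 2) (Fin Nq → Fin 2) ℂ :=
  (List.ofFn fun i => V i ^ k i).prod

/-
Let `U` and `W` be the spaces of couplings acting on the qubits in `S`, resp. outside `S`. For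
`x ∈ U` and `y ∈ W` near `0`, the product `Ψ(x) ⊗ Ψ(y)` is an eigenvector at the coupling `x + y`.
An eigenvector near the nondegenerate `|0⟩` is determined by its norm and phase, so
`Ψ(x + y) = Ψ(x) ⊗ Ψ(y)`. Differentiating `kA` times along `U` and `kB` times along `W` gives the
factorization. A coupling active in both `kA` and `kB`, for which `k!` is not `kA! kB!`, is a
scalar: it does not affect `Ψ`, and all the contributions vanish.
-/

open Filter Topology

section PartialDerivatives

variable {n : ℕ} {E E₁ E₂ E₃ : Type*} [NormedAddCommGroup E] [NormedSpace ℝ E]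
  [NormedAddCommGroup E₁] [NormedSpace ℝ E₁] [NormedAddCommGroup E₂] [NormedSpace ℝ E₂]
  [NormedAddCommGroup E₃] [NormedSpace ℝ E₃]

lemma hasDerivAt_pderiv {F : (Fin n → ℝ) → E} {x : Fin n → ℝ} (hF : DifferentiableAt ℝ F x)
    (i : Fin n) : HasDerivAt (fun t : ℝ => F (x + t • Pi.single i 1)) (pderiv i F x) 0 :=
  hF.hasFDerivAt.hasLineDerivAt (Pi.single i 1)

lemma analyticAt_pderiv [CompleteSpace E] {F : (Fin n → ℝ) → E} {x : Fin n → ℝ}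
    (hF : AnalyticAt ℝ F x) (i : Fin n) : AnalyticAt ℝ (pderiv i F) x :=
  ((ContinuousLinearMap.apply ℝ E (Pi.single i 1 : Fin n → ℝ)).analyticAt _).comp hF.fderiv

lemma analyticAt_iterate_pderiv [CompleteSpace E] {F : (Fin n → ℝ) → E} {x : Fin n → ℝ}
    (hF : AnalyticAt ℝ F x) (i : Fin n) (m : ℕ) : AnalyticAt ℝ ((pderiv i)^[m] F) x := by
  induction m with
  | zero => exact hF
  | succ m ih => rw [Function.iterate_succ_apply']; exact analyticAt_pderiv ih i

lemma analyticAt_foldr_pderiv [CompleteSpace E] {F : (Fin n → ℝ) → E} {x : Fin n → ℝ}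
    (hF : AnalyticAt ℝ F x) (k : Fin n → ℕ) (l : List (Fin n)) :
    AnalyticAt ℝ (l.foldr (fun i G => (pderiv i)^[k i] G) F) x := by
  induction l with
  | nil => exact hF
  | cons i l ih => exact analyticAt_iterate_pderiv ih i (k i)

lemma iterate_pderiv_const (i : Fin n) (m : ℕ) (c : E) :
    (pderiv i)^[m] (fun _ => c) = fun _ => if m = 0 then c else 0 := by
  induction m with
  | zero => simp
  | succ m ih => funext J; simp [Function.iterate_succ_apply', ih, pderiv]

lemma iterPDeriv_const {k : Fin n → ℕ} (hk : k ≠ 0) (c : E) :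
    iterPDeriv k (fun _ => c) = 0 := by
  have foldr_const (l : List (Fin n)) :
      l.foldr (fun i G => (pderiv i)^[k i] G) (fun _ => c)
        = fun _ => if ∀ i ∈ l, k i = 0 then c else 0 := by
    induction l with
    | nil => simp
    | cons i l ih => simp [ih, iterate_pderiv_const, ite_and]
  obtain ⟨i, hi⟩ := Function.ne_iff.mp hk
  funext J
  simp [iterPDeriv, foldr_const, show ¬∀ i, k i = 0 from fun h => hi (h i)]

/-- `F (x + y) = b (G x) (H y)` for all sufficiently small `x ∈ U` and `y ∈ W`: near the origin
`F` decouples into a function of the parameters in `U` and one of the parameters in `W`. -/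
def SplitsLocally (U W : Submodule ℝ (Fin n → ℝ)) (b : E₁ →L[ℝ] E₂ →L[ℝ] E₃)
    (F : (Fin n → ℝ) → E₃) (G : (Fin n → ℝ) → E₁) (H : (Fin n → ℝ) → E₂) : Prop :=
  ∀ᶠ p : (Fin n → ℝ) × (Fin n → ℝ) in 𝓝 (0, 0),
    p.1 ∈ U → p.2 ∈ W → F (p.1 + p.2) = b (G p.1) (H p.2)

lemma splitsLocally_iff {U W : Submodule ℝ (Fin n → ℝ)} {b : E₁ →L[ℝ] E₂ →L[ℝ] E₃}
    {F : (Fin n → ℝ) → E₃} {G : (Fin n → ℝ) → E₁} {H : (Fin n → ℝ) → E₂} :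
    SplitsLocally U W b F G H ↔
      ∀ᶠ p in 𝓝[(U : Set (Fin n → ℝ))] 0 ×ˢ 𝓝[(W : Set (Fin n → ℝ))] 0,
        F (p.1 + p.2) = b (G p.1) (H p.2) := by
  simp [SplitsLocally, ← nhdsWithin_prod_eq, eventually_nhdsWithin_iff, Prod.mk_zero_zero]

lemma tendsto_fst_nhds_zero :
    Tendsto (fun p : (Fin n → ℝ) × (Fin n → ℝ) => p.1) (𝓝 (0, 0)) (𝓝 0) :=
  continuous_fst.tendsto' _ _ rfl

lemma tendsto_fst_add_snd_nhds_zero :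
    Tendsto (fun p : (Fin n → ℝ) × (Fin n → ℝ) => p.1 + p.2) (𝓝 (0, 0)) (𝓝 0) :=
  continuous_add.tendsto' _ _ (add_zero 0)

namespace SplitsLocally

variable {U W : Submodule ℝ (Fin n → ℝ)} {b : E₁ →L[ℝ] E₂ →L[ℝ] E₃}
  {F : (Fin n → ℝ) → E₃} {G : (Fin n → ℝ) → E₁} {H : (Fin n → ℝ) → E₂}

lemma flip (hs : SplitsLocally U W b F G H) : SplitsLocally W U b.flip F H G := by
  filter_upwards [(continuous_swap.tendsto' (0, 0) (0, 0) rfl).eventually hs] with p hp hW hU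
  rw [add_comm]
  exact hp hU hW

lemma pderiv_left [CompleteSpace E₁] [CompleteSpace E₃]
    (hs : SplitsLocally U W b F G H) (hF : AnalyticAt ℝ F 0) (hG : AnalyticAt ℝ G 0)
    {i : Fin n} (hi : Pi.single i 1 ∈ U) :
    SplitsLocally U W b (pderiv i F) (pderiv i G) H := by
  filter_upwards [eventually_eventually_nhds.mpr hs,
    tendsto_fst_add_snd_nhds_zero.eventually hF.eventually_analyticAt,
    tendsto_fst_nhds_zero.eventually hG.eventually_analyticAt] with p hp hFp hGp hU hW
  have derivF := hasDerivAt_pderiv hFp.differentiableAt i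
  have derivG := (b.flip (H p.2)).hasFDerivAt.comp_hasDerivAt 0
    (hasDerivAt_pderiv hGp.differentiableAt i)
  have line : Tendsto (fun t : ℝ => (p.1 + t • (Pi.single i 1 : Fin n → ℝ), p.2)) (𝓝 0) (𝓝 p) :=
    Continuous.tendsto' (by fun_prop) _ _ (by simp)
  refine derivF.unique (derivG.congr_of_eventuallyEq ?_)
  filter_upwards [line.eventually hp] with t ht
  simpa [add_right_comm] using ht (U.add_mem hU (U.smul_mem t hi)) hW

lemma iterate_pderiv_left [CompleteSpace E₁] [CompleteSpace E₃]
    (hs : SplitsLocally U W b F G H) (hF : AnalyticAt ℝ F 0) (hG : AnalyticAt ℝ G 0)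
    {i : Fin n} {m : ℕ} (hi : m ≠ 0 → Pi.single i 1 ∈ U) :
    SplitsLocally U W b ((pderiv i)^[m] F) ((pderiv i)^[m] G) H := by
  induction m with
  | zero => exact hs
  | succ m ih =>
    have hi : Pi.single i 1 ∈ U := hi m.succ_ne_zero
    rw [Function.iterate_succ_apply', Function.iterate_succ_apply']
    exact (ih fun _ => hi).pderiv_left (analyticAt_iterate_pderiv hF i m)
      (analyticAt_iterate_pderiv hG i m) hi

lemma iterate_pderiv_add [CompleteSpace E₁] [CompleteSpace E₂] [CompleteSpace E₃]
    (hs : SplitsLocally U W b F G H) (hF : AnalyticAt ℝ F 0)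
    (hG : AnalyticAt ℝ G 0) (hH : AnalyticAt ℝ H 0) {i : Fin n} {l m : ℕ}
    (hl : l ≠ 0 → Pi.single i 1 ∈ U) (hm : m ≠ 0 → Pi.single i 1 ∈ W) :
    SplitsLocally U W b ((pderiv i)^[l + m] F) ((pderiv i)^[l] G) ((pderiv i)^[m] H) := by
  rw [Function.iterate_add_apply]
  exact (hs.flip.iterate_pderiv_left hF hH hm).flip.iterate_pderiv_left
    (analyticAt_iterate_pderiv hF i m) hG hl

theorem iterPDeriv_add [CompleteSpace E₁] [CompleteSpace E₂] [CompleteSpace E₃]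
    (hs : SplitsLocally U W b F G H) (hF : AnalyticAt ℝ F 0)
    (hG : AnalyticAt ℝ G 0) (hH : AnalyticAt ℝ H 0) {kA kB : Fin n → ℕ}
    (hA : ∀ i, kA i ≠ 0 → Pi.single i 1 ∈ U) (hB : ∀ i, kB i ≠ 0 → Pi.single i 1 ∈ W) :
    iterPDeriv (kA + kB) F 0 = b (iterPDeriv kA G 0) (iterPDeriv kB H 0) := by
  have splits_foldr (l : List (Fin n)) : SplitsLocally U W b
      (l.foldr (fun i G => (pderiv i)^[(kA + kB) i] G) F)
      (l.foldr (fun i G => (pderiv i)^[kA i] G) G)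
      (l.foldr (fun i G => (pderiv i)^[kB i] G) H) := by
    induction l with
    | nil => exact hs
    | cons i l ih =>
      exact ih.iterate_pderiv_add (analyticAt_foldr_pderiv hF _ l)
        (analyticAt_foldr_pderiv hG _ l) (analyticAt_foldr_pderiv hH _ l) (hA i) (hB i)
  simpa [iterPDeriv] using (splits_foldr (List.finRange n)).self_of_nhds U.zero_mem W.zero_mem

end SplitsLocally

end PartialDerivatives

section EigenvectorsNearDiagonal

variable {ι : Type*} [Fintype ι]

lemma updateCol_mulVec_add_single [DecidableEq ι] {m R : Type*} [CommSemiring R] (M : Matrix m ι R)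
    {j : ι} {z : ι → R} (hz : z j = 0) (w : m → R) (c : R) :
    M.updateCol j w *ᵥ (z + Pi.single j c) = M *ᵥ z + c • w := by
  have updateCol_mulVec : M.updateCol j w *ᵥ z = M *ᵥ z := by
    funext i
    refine Finset.sum_congr rfl fun k _ => ?_
    rcases eq_or_ne k j with rfl | hk
    · simp [hz]
    · simp only [updateCol_ne hk]
  rw [mulVec_add, updateCol_mulVec, mulVec_single]
  ext i
  simp

variable [DecidableEq ι] {R : Type*} [CommRing R]

/-- The matrix `u i₀ • A - (A u) i₀` with its `i₀`-th column replaced by `w`. If `u` is an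
eigenvector of `A`, the first matrix is `u i₀` times `A` shifted by the eigenvalue; bordering it
makes it invertible in the nondegenerate case. -/
def borderedShift (i₀ : ι) (A : Matrix ι ι R) (u w : ι → R) : Matrix ι ι R :=
  (u i₀ • A - (A *ᵥ u) i₀ • (1 : Matrix ι ι R)).updateCol i₀ w

lemma borderedShift_diagonal (d : ι → R) (i₀ : ι) :
    borderedShift i₀ (diagonal d) (Pi.single i₀ 1) (Pi.single i₀ 1)
      = diagonal (Function.update (fun i => d i - d i₀) i₀ 1) := by
  ext i j
  by_cases hj : j = i₀ <;> by_cases hij : i = j <;> simp_all [borderedShift, one_apply]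

/- The vector `z = w i₀ • u - u i₀ • w` vanishes at `i₀`, and `u i₀ • (A - a) z` is a multiple of
`w`. So `z`, with a suitable `i₀`-th entry put in, lies in the kernel of the bordered matrix. -/
lemma eigenvectors_parallel_of_det_borderedShift_ne_zero [IsDomain R] {i₀ : ι} {A : Matrix ι ι R}
    {u w : ι → R} {a b : R} (hdet : (borderedShift i₀ A u w).det ≠ 0) (hu : A *ᵥ u = a • u)
    (hw : A *ᵥ w = b • w) : w i₀ • u = u i₀ • w := by
  set z := w i₀ • u - u i₀ • w with hz
  have z_apply : z i₀ = 0 := by simp [hz, mul_comm]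
  have mulVec_z : (u i₀ • A - (A *ᵥ u) i₀ • (1 : Matrix ι ι R)) *ᵥ z
      = -(u i₀ ^ 2 * (b - a)) • w := by
    rw [hu, hz, sub_mulVec, smul_mulVec, smul_mulVec, one_mulVec, mulVec_sub, mulVec_smul,
      mulVec_smul, hu, hw]
    ext i
    simp only [Pi.sub_apply, Pi.smul_apply, smul_eq_mul]
    ring
  have kernel : z + Pi.single i₀ (u i₀ ^ 2 * (b - a)) = 0 := by
    refine eq_zero_of_mulVec_eq_zero hdet ?_
    rw [borderedShift, updateCol_mulVec_add_single _ z_apply, mulVec_z, neg_smul, neg_add_cancel]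
  refine sub_eq_zero.mp (funext fun i => ?_)
  rcases eq_or_ne i i₀ with rfl | hi
  · exact z_apply
  · have kernel_i := congrFun kernel i
    rwa [Pi.add_apply, Pi.single_eq_of_ne hi, add_zero] at kernel_i

lemma eventually_eigenvectors_parallel [IsDomain R] [TopologicalSpace R] [IsTopologicalRing R]
    [T1Space R] {d : ι → R} {i₀ : ι} (hd : ∀ i ≠ i₀, d i ≠ d i₀) :
    ∀ᶠ p : Matrix ι ι R × (ι → R) × (ι → R) in
      𝓝 (diagonal d, Pi.single i₀ 1, Pi.single i₀ 1), ∀ a b : R,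
        p.1 *ᵥ p.2.1 = a • p.2.1 → p.1 *ᵥ p.2.2 = b • p.2.2 →
          p.2.2 i₀ • p.2.1 = p.2.1 i₀ • p.2.2 := by
  have continuous_det : Continuous fun p : Matrix ι ι R × (ι → R) × (ι → R) =>
      (borderedShift i₀ p.1 p.2.1 p.2.2).det := by
    unfold borderedShift
    fun_prop
  have det_ne_zero :
      (borderedShift i₀ (diagonal d) (Pi.single i₀ 1) (Pi.single i₀ 1)).det ≠ 0 := by
    rw [borderedShift_diagonal, det_diagonal, Finset.prod_ne_zero_iff]
    intro i _
    by_cases hi : i = i₀ <;> simp [hi, sub_ne_zero, hd]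
  filter_upwards [continuous_det.continuousAt.eventually_ne det_ne_zero] with p hdet a b hu hw
  exact eigenvectors_parallel_of_det_borderedShift_ne_zero hdet hu hw

end EigenvectorsNearDiagonal

open scoped ComplexOrder in
lemma eq_of_smul_eq_smul_of_sum_normSq_eq_one {ι : Type*} [Fintype ι] {u w : ι → ℂ}
    {α β : ℂ} (hα : 0 < α) (hβ : 0 < β)
    (hu : ∑ i, Complex.normSq (u i) = 1) (hw : ∑ i, Complex.normSq (w i) = 1)
    (h : β • u = α • w) : u = w := by
  have normSq_smul (c : ℂ) {v : ι → ℂ} (hv : ∑ i, Complex.normSq (v i) = 1) :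
      ∑ i, Complex.normSq ((c • v) i) = ‖c‖ ^ 2 := by
    simp only [Pi.smul_apply, smul_eq_mul, Complex.normSq_mul, ← Finset.mul_sum, hv, mul_one]
    rw [Complex.normSq_eq_norm_sq]
  have norm_eq : ‖β‖ = ‖α‖ := by
    rw [← sq_eq_sq₀ (norm_nonneg _) (norm_nonneg _), ← normSq_smul β hu, ← normSq_smul α hw, h]
  have coeff_eq : β = α := by
    rw [Complex.eq_coe_norm_of_nonneg hβ.le, norm_eq, ← Complex.eq_coe_norm_of_nonneg hα.le]
  exact smul_right_injective _ hα.ne' (coeff_eq ▸ h)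

section BipartiteProducts

/-- Amplitude vectors of `N` qubits. -/
abbrev QubitState (N : ℕ) : Type := (Fin N → Fin 2) → ℂ

/-- Operators on the states of `N` qubits. -/
abbrev QubitOp (N : ℕ) : Type := Matrix (Fin N → Fin 2) (Fin N → Fin 2) ℂ

variable {N : ℕ}

lemma ket_eq_single (s : Fin N → Fin 2) : ket s = Pi.single s 1 := by
  funext t
  simp [ket, Pi.single_apply]

/-- The state whose qubits in `S` are those of `u` and whose remaining qubits are those of `w`.
To stay inside one state space, `u` and `w` are full states, of which only the amplitudes with
zeros outside `S`, resp. on `S`, are used. -/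
noncomputable def bipartiteProd (S : Finset (Fin N)) :
    QubitState N →L[ℂ] QubitState N →L[ℂ] QubitState N :=
  LinearMap.mkContinuous₂
    (LinearMap.mk₂ ℂ (fun u w s => u (S.piecewise s 0) * w (S.piecewise 0 s))
      (fun _ _ _ => funext fun _ => add_mul _ _ _) (fun _ _ _ => funext fun _ => mul_assoc _ _ _)
      (fun _ _ _ => funext fun _ => mul_add _ _ _)
      (fun _ _ _ => funext fun _ => mul_left_comm _ _ _))
    1 fun u w => by
      rw [one_mul, pi_norm_le_iff_of_nonneg (by positivity)]
      intro s
      rw [LinearMap.mk₂_apply, norm_mul]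
      gcongr <;> exact norm_le_pi_norm _ _

lemma bipartiteProd_apply (S : Finset (Fin N)) (u w : QubitState N) (s : Fin N → Fin 2) :
    bipartiteProd S u w s = u (S.piecewise s 0) * w (S.piecewise 0 s) := rfl

lemma bipartiteProd_compl (S : Finset (Fin N)) : bipartiteProd Sᶜ = (bipartiteProd S).flip := by
  ext u w s
  simp [bipartiteProd_apply, Finset.piecewise_compl, mul_comm]

lemma piecewise_eq_piecewise_and_iff {α : Type*} (S : Finset α) {β : α → Type*}
    [∀ a, Decidable (a ∈ S)] {f g r : ∀ a, β a} :
    (S.piecewise f r = S.piecewise g r ∧ S.piecewise r f = S.piecewise r g) ↔ f = g := by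
  refine ⟨fun ⟨on_S, off_S⟩ => funext fun a => ?_, by rintro rfl; simp⟩
  by_cases ha : a ∈ S
  · simpa [ha] using congrFun on_S a
  · simpa [ha] using congrFun off_S a

lemma sum_sum_piecewise {α M : Type*} (S : Finset α) {β : α → Type*} [Fintype (∀ a, β a)]
    [∀ a, Decidable (a ∈ S)] [AddCommMonoid M] (f : (∀ a, β a) → (∀ a, β a) → M) :
    ∑ s, ∑ t, f (S.piecewise s t) (S.piecewise t s) = ∑ s, ∑ t, f s t := by
  let exchange : Equiv.Perm ((∀ a, β a) × (∀ a, β a)) :=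
    Function.Involutive.toPerm (fun p => (S.piecewise p.1 p.2, S.piecewise p.2 p.1))
      fun p => by simp [Finset.piecewise_same]
  calc ∑ s, ∑ t, f (S.piecewise s t) (S.piecewise t s)
      = ∑ p, f (exchange p).1 (exchange p).2 :=
        (Fintype.sum_prod_type fun p => f (exchange p).1 (exchange p).2).symm
    _ = ∑ p : (∀ a, β a) × (∀ a, β a), f p.1 p.2 := Equiv.sum_comp exchange fun p => f p.1 p.2
    _ = ∑ s, ∑ t, f s t := Fintype.sum_prod_type fun p => f p.1 p.2

lemma bipartiteProd_ket (S : Finset (Fin N)) (s : Fin N → Fin 2) :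
    bipartiteProd S (ket (S.piecewise s 0)) (ket (S.piecewise 0 s)) = ket s := by
  funext t
  simp only [bipartiteProd_apply, ket, ite_zero_mul_ite_zero, mul_one,
    piecewise_eq_piecewise_and_iff]

lemma bipartiteProd_ket_zero (S : Finset (Fin N)) :
    bipartiteProd S (ket 0) (ket 0) = ket 0 := by
  simpa [Finset.piecewise_same] using bipartiteProd_ket S 0

lemma tendsto_clm_apply₂ {𝕜 E F G α : Type*} [NontriviallyNormedField 𝕜]
    [SeminormedAddCommGroup E] [NormedSpace 𝕜 E] [SeminormedAddCommGroup F] [NormedSpace 𝕜 F]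
    [SeminormedAddCommGroup G] [NormedSpace 𝕜 G] (b : E →L[𝕜] F →L[𝕜] G) {l : Filter α}
    {u : α → E} {w : α → F} {u₀ : E} {w₀ : F} (hu : Tendsto u l (𝓝 u₀))
    (hw : Tendsto w l (𝓝 w₀)) : Tendsto (fun a => b (u a) (w a)) l (𝓝 (b u₀ w₀)) :=
  (b.continuous₂.tendsto (u₀, w₀)).comp (hu.prodMk_nhds hw)

lemma tendsto_bipartiteProd_ket_zero (S : Finset (Fin N)) {α : Type*} {l : Filter α}
    {u w : α → QubitState N} (hu : Tendsto u l (𝓝 (ket 0))) (hw : Tendsto w l (𝓝 (ket 0))) :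
    Tendsto (fun a => bipartiteProd S (u a) (w a)) l (𝓝 (ket 0)) := by
  simpa only [bipartiteProd_ket_zero] using tendsto_clm_apply₂ (bipartiteProd S) hu hw

lemma bipartiteProd_apply_zero (S : Finset (Fin N)) (u w : QubitState N) :
    bipartiteProd S u w 0 = u 0 * w 0 := by
  simp [bipartiteProd_apply, Finset.piecewise_same]

lemma sum_normSq_bipartiteProd {S : Finset (Fin N)} {u w : QubitState N}
    (hu : bipartiteProd S u (ket 0) = u) (hw : bipartiteProd S (ket 0) w = w) :
    ∑ s, Complex.normSq (bipartiteProd S u w s)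
      = (∑ s, Complex.normSq (u s)) * ∑ s, Complex.normSq (w s) := by
  have exchanged_amplitudes (s t : Fin N → Fin 2) :
      u (S.piecewise s t) * w (S.piecewise t s) = bipartiteProd S u w s * ket 0 t := by
    have hu_st := congrFun hu (S.piecewise s t)
    have hw_ts := congrFun hw (S.piecewise t s)
    have ket_t := congrFun (bipartiteProd_ket_zero S) t
    simp only [bipartiteProd_apply, Finset.piecewise_idem_left, Finset.piecewise_idem_right]
      at hu_st hw_ts ket_t ⊢
    rw [← hu_st, ← hw_ts, ← ket_t]
    ring
  calc ∑ s, Complex.normSq (bipartiteProd S u w s)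
      = ∑ s, ∑ t, Complex.normSq (u (S.piecewise s t) * w (S.piecewise t s)) := by
        simp [exchanged_amplitudes, ket, apply_ite Complex.normSq]
    _ = ∑ s, ∑ t, Complex.normSq (u s * w t) :=
        sum_sum_piecewise S fun s t => Complex.normSq (u s * w t)
    _ = (∑ s, Complex.normSq (u s)) * ∑ s, Complex.normSq (w s) := by
        simp only [Complex.normSq_mul, Fintype.sum_mul_sum]

end BipartiteProducts

section LocalOperators

variable {N Nc : ℕ} {S : Finset (Fin N)}

/-- The operators acting on the qubits in `S` only: `A (u ⊗ w) = (A u) ⊗ w`. -/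
def localOps (S : Finset (Fin N)) : Subalgebra ℂ (QubitOp N) where
  carrier := {A | ∀ u w, A *ᵥ bipartiteProd S u w = bipartiteProd S (A *ᵥ u) w}
  mul_mem' hA hB u w := by rw [← mulVec_mulVec, hB, hA, mulVec_mulVec]
  add_mem' hA hB u w := by simp [add_mulVec, hA u w, hB u w]
  algebraMap_mem' c u w := by simp [Algebra.algebraMap_eq_smul_one, smul_mulVec]

lemma mulVec_bipartiteProd_left {A : QubitOp N} (hA : A ∈ localOps S) (u w : QubitState N) :
    A *ᵥ bipartiteProd S u w = bipartiteProd S (A *ᵥ u) w :=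
  hA u w

lemma mulVec_bipartiteProd_right {A : QubitOp N} (hA : A ∈ localOps Sᶜ) (u w : QubitState N) :
    A *ᵥ bipartiteProd S u w = bipartiteProd S u (A *ᵥ w) := by
  simpa [bipartiteProd_compl] using mulVec_bipartiteProd_left hA w u

lemma localOps_inf_localOps_compl (S : Finset (Fin N)) : localOps S ⊓ localOps Sᶜ = ⊥ := by
  refine eq_bot_iff.mpr fun A ⟨hA, hA'⟩ => Algebra.mem_bot.mpr ⟨(A *ᵥ ket 0) 0, ?_⟩
  set c := (A *ᵥ ket 0) 0
  have mulVec_ket_zero : A *ᵥ ket 0 = c • ket 0 := by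
    have left_eq := mulVec_bipartiteProd_left hA (ket 0) (ket 0)
    have right_eq := mulVec_bipartiteProd_right hA' (ket 0) (ket 0)
    rw [bipartiteProd_ket_zero] at left_eq right_eq
    funext t
    have left_t := congrFun left_eq t
    have right_t := congrFun right_eq (S.piecewise t 0)
    have ket_t := congrFun (bipartiteProd_ket_zero S) t
    simp only [bipartiteProd_apply, Finset.piecewise_idem_left, Finset.piecewise_idem_right,
      Finset.piecewise_same] at left_t right_t ket_t
    rw [left_t, right_t, mul_right_comm, ket_t, Pi.smul_apply, smul_eq_mul, mul_comm]
  have mulVec_ket_left (s : Fin N → Fin 2) :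
      A *ᵥ ket (S.piecewise s 0) = c • ket (S.piecewise s 0) := by
    have ket_eq : bipartiteProd S (ket (S.piecewise s 0)) (ket 0) = ket (S.piecewise s 0) := by
      simpa [Finset.piecewise_same] using bipartiteProd_ket S (S.piecewise s 0)
    rw [← ket_eq, mulVec_bipartiteProd_right hA', mulVec_ket_zero, map_smul]
  refine ext_of_mulVec_single fun s => ?_
  rw [← ket_eq_single, ← bipartiteProd_ket S s, mulVec_bipartiteProd_left hA, mulVec_ket_left]
  simp [Algebra.algebraMap_eq_smul_one, smul_mulVec]

lemma Vpow_add_mulVec_bipartiteProd {V : Fin Nc → QubitOp N} {kA kB : Fin Nc → ℕ}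
    (hA : ∀ i, kA i ≠ 0 → V i ∈ localOps S) (hB : ∀ i, kB i ≠ 0 → V i ∈ localOps Sᶜ)
    (u w : QubitState N) :
    Vpow V (kA + kB) *ᵥ bipartiteProd S u w
      = bipartiteProd S (Vpow V kA *ᵥ u) (Vpow V kB *ᵥ w) := by
  have pow_mem_of {T : Finset (Fin N)} {k : Fin Nc → ℕ} (hk : ∀ i, k i ≠ 0 → V i ∈ localOps T)
      (i : Fin Nc) : V i ^ k i ∈ localOps T := by
    rcases eq_or_ne (k i) 0 with hi | hi
    · rw [hi, pow_zero]
      exact one_mem _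
    · exact pow_mem (hk i hi) _
  simp only [Vpow, List.ofFn_eq_map]
  induction List.finRange Nc with
  | nil => simp
  | cons i l ih =>
    simp only [List.map_cons, List.prod_cons, ← mulVec_mulVec, Pi.add_apply, pow_add] at ih ⊢
    rw [ih, mulVec_bipartiteProd_right (pow_mem_of hB i),
      mulVec_bipartiteProd_left (pow_mem_of hA i)]

end LocalOperators

section Hamiltonian

variable {N Nc : ℕ}

/-- The eigenvalue of `H₀ = -∑ₙ hₙ Zₙ` at the basis state `|s⟩`. -/
def freeEnergy (h : Fin N → ℝ) (s : Fin N → Fin 2) : ℝ :=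
  -∑ n, h n * (-1) ^ (s n : ℕ)

lemma freeEnergy_add_freeEnergy_zero (h : Fin N → ℝ) (S : Finset (Fin N)) (s : Fin N → Fin 2) :
    freeEnergy h s + freeEnergy h 0
      = freeEnergy h (S.piecewise s 0) + freeEnergy h (S.piecewise 0 s) := by
  simp only [freeEnergy, ← neg_add, ← Finset.sum_add_distrib, neg_inj]
  refine Finset.sum_congr rfl fun n _ => ?_
  by_cases hn : n ∈ S
  · simp [hn]
  · simp [hn, add_comm]

lemma freeEnergy_zero_lt {h : Fin N → ℝ} (hpos : ∀ n, 0 < h n) {s : Fin N → Fin 2} (hs : s ≠ 0) :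
    freeEnergy h 0 < freeEnergy h s := by
  obtain ⟨m, hm⟩ := Function.ne_iff.mp hs
  have sign_le (n : Fin N) : ((-1 : ℝ) ^ (s n : ℕ)) ≤ 1 := by
    generalize s n = a
    fin_cases a <;> norm_num
  have sign_m : ((-1 : ℝ) ^ (s m : ℕ)) = -1 := by
    rw [Fin.eq_one_of_ne_zero _ hm]
    norm_num
  simp only [freeEnergy, neg_lt_neg_iff]
  refine Finset.sum_lt_sum (fun n _ => ?_) ⟨m, Finset.mem_univ m, ?_⟩
  · simpa using mul_le_mul_of_nonneg_left (sign_le n) (hpos n).le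
  · rw [sign_m]
    simpa using (neg_lt_self (hpos m))

/-- `H₀ + ∑ᵢ Jᵢ Vᵢ` for arbitrary coupling operators `Vᵢ`. -/
noncomputable def hamiltonian (h : Fin N → ℝ) (V : Fin Nc → QubitOp N) (J : Fin Nc → ℝ) :
    QubitOp N :=
  (-∑ n, (h n : ℂ) • pauliTensor fun q => if q = n then 3 else 0) + ∑ i, (J i : ℂ) • V i

lemma pauliTensor_single_three (n : Fin N) :
    pauliTensor (fun q => if q = n then 3 else 0)
      = diagonal fun s => ((-1 : ℂ) ^ (s n : ℕ)) := by
  ext s t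
  have factor (q : Fin N) : pauli1 (if q = n then 3 else 0) (s q) (t q)
      = if s q = t q then (if q = n then (-1) ^ (s q : ℕ) else 1) else 0 := by
    generalize s q = a, t q = b
    split_ifs <;> fin_cases a <;> fin_cases b <;> simp_all [pauli1]
  simp [pauliTensor, factor, Finset.prod_ite_zero, diagonal_apply, funext_iff]

lemma hamiltonian_eq (h : Fin N → ℝ) (V : Fin Nc → QubitOp N) (J : Fin Nc → ℝ) :
    hamiltonian h V J
      = diagonal (fun s => (freeEnergy h s : ℂ)) + Fintype.linearCombination ℝ V J := by
  simp only [hamiltonian, pauliTensor_single_three, Fintype.linearCombination_apply,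
    Complex.coe_smul]
  congr 1
  ext s t
  rcases eq_or_ne s t with rfl | hst
  · simp [freeEnergy, Matrix.sum_apply]
  · simp [Matrix.sum_apply, hst]

/-- The parameter values `J` for which `∑ᵢ Jᵢ Vᵢ ∈ A`. -/
noncomputable def couplingsIn (V : Fin Nc → QubitOp N) (A : Subalgebra ℂ (QubitOp N)) :
    Submodule ℝ (Fin Nc → ℝ) :=
  (A.toSubmodule.restrictScalars ℝ).comap (Fintype.linearCombination ℝ V)

variable {V : Fin Nc → QubitOp N}

lemma mem_couplingsIn {A : Subalgebra ℂ (QubitOp N)} {J : Fin Nc → ℝ} :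
    J ∈ couplingsIn V A ↔ Fintype.linearCombination ℝ V J ∈ A := Iff.rfl

lemma single_mem_couplingsIn {A : Subalgebra ℂ (QubitOp N)} {i : Fin Nc} (hi : V i ∈ A) :
    Pi.single i 1 ∈ couplingsIn V A := by
  rwa [mem_couplingsIn, Fintype.linearCombination_apply_single, one_smul]

lemma continuous_hamiltonian (h : Fin N → ℝ) (V : Fin Nc → QubitOp N) :
    Continuous (hamiltonian h V) := by
  unfold hamiltonian
  fun_prop

lemma hamiltonian_zero (h : Fin N → ℝ) (V : Fin Nc → QubitOp N) :
    hamiltonian h V 0 = diagonal fun s => (freeEnergy h s : ℂ) := by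
  rw [hamiltonian_eq, map_zero, add_zero]

lemma hamiltonian_zero_mulVec_ket_zero (h : Fin N → ℝ) (V : Fin Nc → QubitOp N) :
    hamiltonian h V 0 *ᵥ ket 0 = (freeEnergy h 0 : ℂ) • ket 0 := by
  ext s
  simp +contextual [hamiltonian_zero, mulVec_diagonal, ket]

lemma hamiltonian_add_mulVec_bipartiteProd {S : Finset (Fin N)} (h : Fin N → ℝ)
    {x y : Fin Nc → ℝ} (hx : x ∈ couplingsIn V (localOps S)) (hy : y ∈ couplingsIn V (localOps Sᶜ))
    (u w : QubitState N) :
    hamiltonian h V (x + y) *ᵥ bipartiteProd S u w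
      = bipartiteProd S (hamiltonian h V x *ᵥ u) w + bipartiteProd S u (hamiltonian h V y *ᵥ w)
        - (freeEnergy h 0 : ℂ) • bipartiteProd S u w := by
  have free_part : diagonal (fun s => (freeEnergy h s : ℂ)) *ᵥ bipartiteProd S u w
      = bipartiteProd S (diagonal (fun s => (freeEnergy h s : ℂ)) *ᵥ u) w
        + bipartiteProd S u (diagonal (fun s => (freeEnergy h s : ℂ)) *ᵥ w)
        - (freeEnergy h 0 : ℂ) • bipartiteProd S u w := by
    funext s
    have energies := congrArg (Complex.ofReal) (freeEnergy_add_freeEnergy_zero h S s)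
    push_cast at energies
    simp only [bipartiteProd_apply, mulVec_diagonal, Pi.add_apply, Pi.sub_apply, Pi.smul_apply,
      smul_eq_mul]
    linear_combination u (S.piecewise s 0) * w (S.piecewise 0 s) * energies
  simp only [hamiltonian_eq, map_add, add_mulVec, _root_.add_apply, free_part,
    mulVec_bipartiteProd_left (mem_couplingsIn.mp hx),
    mulVec_bipartiteProd_right (mem_couplingsIn.mp hy)]
  abel

lemma exists_eigenvalue_bipartiteProd {S : Finset (Fin N)} (h : Fin N → ℝ)
    {x y : Fin Nc → ℝ} (hx : x ∈ couplingsIn V (localOps S)) (hy : y ∈ couplingsIn V (localOps Sᶜ))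
    {u w : QubitState N} (hu : ∃ e : ℂ, hamiltonian h V x *ᵥ u = e • u)
    (hw : ∃ e : ℂ, hamiltonian h V y *ᵥ w = e • w) :
    ∃ e : ℂ, hamiltonian h V (x + y) *ᵥ bipartiteProd S u w = e • bipartiteProd S u w := by
  obtain ⟨a, ha⟩ := hu
  obtain ⟨b, hb⟩ := hw
  refine ⟨a + b - freeEnergy h 0, ?_⟩
  rw [hamiltonian_add_mulVec_bipartiteProd h hx hy, ha, hb, map_smul, map_smul, sub_smul, add_smul,
    _root_.smul_apply]

end Hamiltonian

section PerturbedEigenstates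

open scoped ComplexOrder

variable {N Nc : ℕ}

/-- `Ψ` is an analytic family of normalized eigenvectors of `H₀ + ∑ᵢ Jᵢ Vᵢ` near `J = 0` which
starts at `|0⟩` and whose phase is fixed by `⟨0|Ψ⟩ > 0`. The energy is left implicit. -/
structure IsPerturbedEigenstate (h : Fin N → ℝ) (V : Fin Nc → QubitOp N)
    (Ψ : (Fin Nc → ℝ) → QubitState N) : Prop where
  analyticAt : AnalyticAt ℝ Ψ 0
  zero : Ψ 0 = ket 0
  eigenvector : ∀ᶠ J in 𝓝 0, ∃ e : ℂ, hamiltonian h V J *ᵥ Ψ J = e • Ψ J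
  sum_normSq : ∀ᶠ J in 𝓝 0, ∑ s, Complex.normSq (Ψ J s) = 1
  pos : ∀ᶠ J in 𝓝 0, 0 < Ψ J 0

namespace IsPerturbedEigenstate

variable {h : Fin N → ℝ} {V : Fin Nc → QubitOp N} {Ψ : (Fin Nc → ℝ) → QubitState N}

lemma tendsto_ket_zero (hΨ : IsPerturbedEigenstate h V Ψ) : Tendsto Ψ (𝓝 0) (𝓝 (ket 0)) :=
  hΨ.zero ▸ hΨ.analyticAt.continuousAt.tendsto

lemma eventually_parallel (hΨ : IsPerturbedEigenstate h V Ψ)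
    (hgap : ∀ s ≠ 0, freeEnergy h s ≠ freeEnergy h 0) {α : Type*} {l : Filter α}
    {J : α → Fin Nc → ℝ} {u : α → QubitState N} (hJ : Tendsto J l (𝓝 0))
    (hu : Tendsto u l (𝓝 (ket 0))) (hu_eig : ∀ᶠ a in l, ∃ e : ℂ,
      hamiltonian h V (J a) *ᵥ u a = e • u a) :
    ∀ᶠ a in l, Ψ (J a) 0 • u a = u a 0 • Ψ (J a) := by
  have gap (s : Fin N → Fin 2) (hs : s ≠ 0) : (freeEnergy h s : ℂ) ≠ freeEnergy h 0 :=
    Complex.ofReal_injective.ne (hgap s hs)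
  have tendsto_base : Tendsto (fun a => (hamiltonian h V (J a), u a, Ψ (J a))) l
      (𝓝 (diagonal fun s => (freeEnergy h s : ℂ), Pi.single 0 1, Pi.single 0 1)) := by
    have tendsto_H := ((continuous_hamiltonian h V).tendsto 0).comp hJ
    rw [hamiltonian_zero] at tendsto_H
    rw [← ket_eq_single]
    exact tendsto_H.prodMk_nhds (hu.prodMk_nhds (hΨ.tendsto_ket_zero.comp hJ))
  filter_upwards [tendsto_base.eventually (eventually_eigenvectors_parallel gap), hu_eig,
    hJ.eventually hΨ.eigenvector] with a parallel ⟨e, he⟩ ⟨e', he'⟩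
  exact parallel e e' he he'

lemma eventually_eq (hΨ : IsPerturbedEigenstate h V Ψ)
    (hgap : ∀ s ≠ 0, freeEnergy h s ≠ freeEnergy h 0) {α : Type*} {l : Filter α}
    {J : α → Fin Nc → ℝ} {u : α → QubitState N} (hJ : Tendsto J l (𝓝 0))
    (hu : Tendsto u l (𝓝 (ket 0)))
    (hu_eig : ∀ᶠ a in l, ∃ e : ℂ, hamiltonian h V (J a) *ᵥ u a = e • u a)
    (hu_norm : ∀ᶠ a in l, ∑ s, Complex.normSq (u a s) = 1) (hu_pos : ∀ᶠ a in l, 0 < u a 0) :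
    ∀ᶠ a in l, Ψ (J a) = u a := by
  filter_upwards [hΨ.eventually_parallel hgap hJ hu hu_eig, hJ.eventually hΨ.sum_normSq, hu_norm,
    hJ.eventually hΨ.pos, hu_pos] with a parallel norm_Ψ norm_u pos_Ψ pos_u
  exact eq_of_smul_eq_smul_of_sum_normSq_eq_one pos_Ψ pos_u norm_Ψ norm_u parallel.symm

lemma eventually_bipartiteProd_ket_zero (hΨ : IsPerturbedEigenstate h V Ψ)
    (hgap : ∀ s ≠ 0, freeEnergy h s ≠ freeEnergy h 0) (S : Finset (Fin N)) :
    ∀ᶠ J in 𝓝[(couplingsIn V (localOps S) : Set (Fin Nc → ℝ))] 0,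
      bipartiteProd S (Ψ J) (ket 0) = Ψ J := by
  set l := 𝓝[(couplingsIn V (localOps S) : Set (Fin Nc → ℝ))] 0
  have tendsto_l : Tendsto id l (𝓝 0) := tendsto_id' |>.mpr nhdsWithin_le_nhds
  have eigenvector : ∀ᶠ J in l, ∃ e : ℂ, hamiltonian h V J *ᵥ bipartiteProd S (Ψ J) (ket 0)
      = e • bipartiteProd S (Ψ J) (ket 0) := by
    filter_upwards [self_mem_nhdsWithin, tendsto_l.eventually hΨ.eigenvector] with J hJ eig
    simpa using exists_eigenvalue_bipartiteProd h hJ (Submodule.zero_mem _) eig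
      ⟨_, hamiltonian_zero_mulVec_ket_zero h V⟩
  filter_upwards [hΨ.eventually_parallel hgap tendsto_l (tendsto_bipartiteProd_ket_zero S
    (hΨ.tendsto_ket_zero.comp tendsto_l) tendsto_const_nhds) eigenvector,
    tendsto_l.eventually hΨ.pos] with J parallel pos
  refine smul_right_injective _ pos.ne' ?_
  simpa [bipartiteProd_apply_zero, ket] using parallel

theorem splitsLocally (hΨ : IsPerturbedEigenstate h V Ψ)
    (hgap : ∀ s ≠ 0, freeEnergy h s ≠ freeEnergy h 0) (S : Finset (Fin N)) :
    SplitsLocally (couplingsIn V (localOps S)) (couplingsIn V (localOps Sᶜ))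
      ((bipartiteProd S).bilinearRestrictScalars ℝ) Ψ Ψ Ψ := by
  rw [splitsLocally_iff]
  set lA := 𝓝[(couplingsIn V (localOps S) : Set (Fin Nc → ℝ))] 0
  set lB := 𝓝[(couplingsIn V (localOps Sᶜ) : Set (Fin Nc → ℝ))] 0
  have tendsto_x : Tendsto Prod.fst (lA ×ˢ lB) (𝓝 0) := tendsto_fst.mono_right nhdsWithin_le_nhds
  have tendsto_y : Tendsto Prod.snd (lA ×ˢ lB) (𝓝 0) := tendsto_snd.mono_right nhdsWithin_le_nhds
  have tendsto_sum : Tendsto (fun p => p.1 + p.2) (lA ×ˢ lB) (𝓝 0) := by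
    simpa using tendsto_x.add tendsto_y
  have left_product : ∀ᶠ p in lA ×ˢ lB, bipartiteProd S (Ψ p.1) (ket 0) = Ψ p.1 :=
    tendsto_fst.eventually (hΨ.eventually_bipartiteProd_ket_zero hgap S)
  have right_product : ∀ᶠ p in lA ×ˢ lB, bipartiteProd S (ket 0) (Ψ p.2) = Ψ p.2 := by
    simpa [bipartiteProd_compl] using
      tendsto_snd.eventually (hΨ.eventually_bipartiteProd_ket_zero hgap Sᶜ)
  have eigenvector : ∀ᶠ p in lA ×ˢ lB, ∃ e : ℂ,
      hamiltonian h V (p.1 + p.2) *ᵥ bipartiteProd S (Ψ p.1) (Ψ p.2)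
        = e • bipartiteProd S (Ψ p.1) (Ψ p.2) := by
    filter_upwards [tendsto_fst.eventually self_mem_nhdsWithin,
      tendsto_snd.eventually self_mem_nhdsWithin, tendsto_x.eventually hΨ.eigenvector,
      tendsto_y.eventually hΨ.eigenvector] with p hx hy eig_x eig_y
    exact exists_eigenvalue_bipartiteProd h hx hy eig_x eig_y
  have norm_product : ∀ᶠ p in lA ×ˢ lB,
      ∑ s, Complex.normSq (bipartiteProd S (Ψ p.1) (Ψ p.2) s) = 1 := by
    filter_upwards [left_product, right_product, tendsto_x.eventually hΨ.sum_normSq,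
      tendsto_y.eventually hΨ.sum_normSq] with p left right norm_x norm_y
    rw [sum_normSq_bipartiteProd left right, norm_x, norm_y, one_mul]
  have pos_product : ∀ᶠ p in lA ×ˢ lB, 0 < bipartiteProd S (Ψ p.1) (Ψ p.2) 0 := by
    filter_upwards [tendsto_x.eventually hΨ.pos, tendsto_y.eventually hΨ.pos] with p pos_x pos_y
    rw [bipartiteProd_apply_zero]
    exact mul_pos pos_x pos_y
  exact hΨ.eventually_eq hgap tendsto_sum (tendsto_bipartiteProd_ket_zero S
    (hΨ.tendsto_ket_zero.comp tendsto_x) (hΨ.tendsto_ket_zero.comp tendsto_y))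
    eigenvector norm_product pos_product

lemma splitsLocally_bot (hΨ : IsPerturbedEigenstate h V Ψ)
    (hgap : ∀ s ≠ 0, freeEnergy h s ≠ freeEnergy h 0) :
    SplitsLocally (couplingsIn V ⊥) ⊤ (ContinuousLinearMap.lsmul ℝ ℝ) Ψ (fun _ => 1) Ψ := by
  rw [splitsLocally_iff]
  set l := 𝓝[(couplingsIn V ⊥ : Set (Fin Nc → ℝ))] 0
    ×ˢ 𝓝[((⊤ : Submodule ℝ (Fin Nc → ℝ)) : Set (Fin Nc → ℝ))] 0
  have tendsto_x : Tendsto Prod.fst l (𝓝 0) := tendsto_fst.mono_right nhdsWithin_le_nhds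
  have tendsto_y : Tendsto Prod.snd l (𝓝 0) := tendsto_snd.mono_right nhdsWithin_le_nhds
  have tendsto_sum : Tendsto (fun p => p.1 + p.2) l (𝓝 0) := by
    simpa using tendsto_x.add tendsto_y
  have eigenvector : ∀ᶠ p in l, ∃ e : ℂ, hamiltonian h V (p.1 + p.2) *ᵥ Ψ p.2 = e • Ψ p.2 := by
    filter_upwards [tendsto_fst.eventually self_mem_nhdsWithin,
      tendsto_y.eventually hΨ.eigenvector] with p hx ⟨e, he⟩
    obtain ⟨c, hc⟩ := Algebra.mem_bot.mp (mem_couplingsIn.mp hx)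
    refine ⟨c + e, ?_⟩
    rw [hamiltonian_eq, map_add, add_left_comm, ← hamiltonian_eq, ← hc, add_mulVec, he, add_smul,
      Algebra.algebraMap_eq_smul_one, smul_mulVec, one_mulVec]
  simpa using hΨ.eventually_eq hgap tendsto_sum (hΨ.tendsto_ket_zero.comp tendsto_y) eigenvector
    (tendsto_y.eventually hΨ.sum_normSq) (tendsto_y.eventually hΨ.pos)

/- A scalar `Vᵢ` only shifts the spectrum, so `Ψ` does not depend on `Jᵢ`. -/
lemma iterPDeriv_eq_zero (hΨ : IsPerturbedEigenstate h V Ψ)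
    (hgap : ∀ s ≠ 0, freeEnergy h s ≠ freeEnergy h 0) {k : Fin Nc → ℕ} {i : Fin Nc}
    (hi : V i ∈ (⊥ : Subalgebra ℂ (QubitOp N))) (hk : k i ≠ 0) : iterPDeriv k Ψ 0 = 0 := by
  have split : k = Pi.single i (k i) + Function.update k i 0 := by
    ext j
    rcases eq_or_ne j i with rfl | hj <;> simp [*]
  have mem_bot (j : Fin Nc) (hj : (Pi.single i (k i) : Fin Nc → ℕ) j ≠ 0) :
      Pi.single j 1 ∈ couplingsIn V ⊥ := by
    obtain rfl : j = i := by
      by_contra hji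
      exact hj (Pi.single_eq_of_ne hji _)
    exact single_mem_couplingsIn hi
  rw [split, (hΨ.splitsLocally_bot hgap).iterPDeriv_add hΨ.analyticAt analyticAt_const hΨ.analyticAt
    mem_bot fun _ _ => Submodule.mem_top, iterPDeriv_const (Pi.single_ne_zero_iff.mpr hk)]
  simp

end IsPerturbedEigenstate

/-- `c` is a coefficient `C_k` of the perturbation expansion: `(1/k!) ∂ᵏΨ(0) = c V^{·k}|0⟩`. It is
unique only if `V^{·k}|0⟩ ≠ 0`. -/
def IsContribution (V : Fin Nc → QubitOp N) (Ψ : (Fin Nc → ℝ) → QubitState N) (k : Fin Nc → ℕ)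
    (c : ℂ) : Prop :=
  (∏ i, ((k i).factorial : ℝ))⁻¹ • iterPDeriv k Ψ 0 = c • Vpow V k *ᵥ ket 0

lemma prod_factorial_add {kA kB : Fin Nc → ℕ} (hdisj : ∀ i, kA i = 0 ∨ kB i = 0) :
    ∏ i, (((kA + kB) i).factorial : ℝ)
      = (∏ i, ((kA i).factorial : ℝ)) * ∏ i, ((kB i).factorial : ℝ) := by
  rw [← Finset.prod_mul_distrib]
  refine Finset.prod_congr rfl fun i _ => ?_
  rcases hdisj i with hi | hi <;> simp [hi]

theorem IsContribution.add {h : Fin N → ℝ} {V : Fin Nc → QubitOp N}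
    {Ψ : (Fin Nc → ℝ) → QubitState N} (hΨ : IsPerturbedEigenstate h V Ψ)
    (hgap : ∀ s ≠ 0, freeEnergy h s ≠ freeEnergy h 0) {S : Finset (Fin N)} {kA kB : Fin Nc → ℕ}
    (hA : ∀ i, kA i ≠ 0 → V i ∈ localOps S) (hB : ∀ i, kB i ≠ 0 → V i ∈ localOps Sᶜ) {a b : ℂ}
    (ha : IsContribution V Ψ kA a) (hb : IsContribution V Ψ kB b) :
    IsContribution V Ψ (kA + kB) (a * b) := by
  unfold IsContribution at ha hb ⊢
  have deriv_product := (hΨ.splitsLocally hgap S).iterPDeriv_add hΨ.analyticAt hΨ.analyticAt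
    hΨ.analyticAt (fun i hi => single_mem_couplingsIn (hA i hi))
    (fun i hi => single_mem_couplingsIn (hB i hi))
  rw [ContinuousLinearMap.bilinearRestrictScalars_apply_apply] at deriv_product
  have contribution_product : (a * b) • Vpow V (kA + kB) *ᵥ ket 0
      = bipartiteProd S (a • Vpow V kA *ᵥ ket 0) (b • Vpow V kB *ᵥ ket 0) := by
    rw [← bipartiteProd_ket_zero S, Vpow_add_mulVec_bipartiteProd hA hB, bipartiteProd_ket_zero]
    simp only [map_smul, _root_.smul_apply, smul_smul, mul_comm]
  rw [deriv_product, contribution_product, ← ha, ← hb]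
  by_cases hdisj : ∀ i, kA i = 0 ∨ kB i = 0
  · simp only [prod_factorial_add hdisj, mul_inv,
      ContinuousLinearMap.map_smul_of_tower, _root_.smul_apply, smul_smul]
  · push Not at hdisj
    obtain ⟨i, hiA, hiB⟩ := hdisj
    have scalar : V i ∈ (⊥ : Subalgebra ℂ (QubitOp N)) :=
      localOps_inf_localOps_compl S ▸ ⟨hA i hiA, hB i hiB⟩
    simp [hΨ.iterPDeriv_eq_zero hgap scalar hiA]

end PerturbedEigenstates

section PauliStrings

variable {N Nc : ℕ}

/-- A Pauli matrix maps basis states to multiples of basis states; `pauliFlip p` is the bit which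
`pauli1 p` adds, `1` for `X` and `Y`. -/
def pauliFlip : Fin 4 → Fin 2 := ![0, 1, 1, 0]

lemma pauli1_apply_of_ne (p : Fin 4) {a b : Fin 2} (hb : b ≠ a + pauliFlip p) :
    pauli1 p a b = 0 := by
  fin_cases p <;> fin_cases a <;> fin_cases b <;> simp_all [pauli1, pauliFlip]

lemma pauli1_mul_self (p : Fin 4) : pauli1 p * pauli1 p = 1 := by
  fin_cases p <;> ext a b <;> fin_cases a <;> fin_cases b <;> simp [pauli1]

lemma pauliTensor_mulVec (f : Fin N → Fin 4) (u : QubitState N) (s : Fin N → Fin 2) :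
    (pauliTensor f *ᵥ u) s
      = (∏ n, pauli1 (f n) (s n) (s n + pauliFlip (f n))) * u (s + pauliFlip ∘ f) := by
  rw [mulVec, dotProduct]
  refine Fintype.sum_eq_single (s + pauliFlip ∘ f) fun t ht => ?_
  obtain ⟨n, hn⟩ := Function.ne_iff.mp ht
  have entry_eq_zero : pauliTensor f s t = 0 :=
    Finset.prod_eq_zero (Finset.mem_univ n) (pauli1_apply_of_ne (f n) hn)
  rw [entry_eq_zero, zero_mul]

lemma pauliTensor_mul_self (f : Fin N → Fin 4) : pauliTensor f * pauliTensor f = 1 := by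
  ext s t
  calc (pauliTensor f * pauliTensor f) s t
      = ∑ r : Fin N → Fin 2, ∏ n, pauli1 (f n) (s n) (r n) * pauli1 (f n) (r n) (t n) := by
        simp only [mul_apply, pauliTensor, Finset.prod_mul_distrib]
    _ = ∏ n, (pauli1 (f n) * pauli1 (f n)) (s n) (t n) := by
        simp only [mul_apply, Fintype.prod_sum]
    _ = (1 : QubitOp N) s t := by
        simp [pauli1_mul_self, one_apply, Finset.prod_ite_zero, funext_iff]

lemma pauliTensor_mem_localOps {S : Finset (Fin N)} {f : Fin N → Fin 4}
    (hf : ∀ n ∉ S, f n = 0) : pauliTensor f ∈ localOps S := by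
  intro u w
  funext s
  have flipped_in : S.piecewise (s + pauliFlip ∘ f) 0 = S.piecewise s 0 + pauliFlip ∘ f := by
    funext n
    by_cases hn : n ∈ S <;> simp [hn, hf, pauliFlip]
  have unflipped_off : S.piecewise 0 (s + pauliFlip ∘ f) = S.piecewise 0 s := by
    funext n
    by_cases hn : n ∈ S <;> simp [hn, hf, pauliFlip]
  have phases_eq : ∏ n, pauli1 (f n) (s n) (s n + pauliFlip (f n))
      = ∏ n, pauli1 (f n) (S.piecewise s 0 n) (S.piecewise s 0 n + pauliFlip (f n)) := by
    refine Finset.prod_congr rfl fun n _ => ?_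
    by_cases hn : n ∈ S <;> simp [hn, hf, pauliFlip, pauli1]
  rw [pauliTensor_mulVec, bipartiteProd_apply, bipartiteProd_apply, pauliTensor_mulVec,
    flipped_in, unflipped_off, phases_eq, mul_assoc]

lemma Vpow_mulVec_ne_zero {V : Fin Nc → QubitOp N} (hV : ∀ i, IsUnit (V i)) (k : Fin Nc → ℕ)
    {u : QubitState N} (hu : u ≠ 0) : Vpow V k *ᵥ u ≠ 0 := by
  have isUnit_Vpow : IsUnit (Vpow V k) := by
    refine List.prod_isUnit fun A hA => ?_
    obtain ⟨i, rfl⟩ := List.mem_ofFn.mp hA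
    exact (hV i).pow (k i)
  rw [← mulVec_zero (Vpow V k)]
  exact (mulVec_injective_of_isUnit isUnit_Vpow).ne hu

lemma exists_mem_localOps_of_disjoint {Vf : Fin Nc → Fin N → Fin 4} {kA kB : Fin Nc → ℕ}
    (hdisj : ∀ q, ¬((∃ i, kA i ≠ 0 ∧ Vf i q ≠ 0) ∧ (∃ i, kB i ≠ 0 ∧ Vf i q ≠ 0))) :
    ∃ S : Finset (Fin N), (∀ i, kA i ≠ 0 → pauliTensor (Vf i) ∈ localOps S) ∧
      ∀ i, kB i ≠ 0 → pauliTensor (Vf i) ∈ localOps Sᶜ := by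
  classical
  refine ⟨Finset.univ.filter fun q => ∃ i, kA i ≠ 0 ∧ Vf i q ≠ 0,
    fun i hi => pauliTensor_mem_localOps fun q hq => ?_,
    fun i hi => pauliTensor_mem_localOps fun q hq => ?_⟩ <;> by_contra hVq
  · exact hq (by simpa using ⟨i, hi, hVq⟩)
  · exact hdisj q ⟨by simpa using hq, i, hi, hVq⟩

end PauliStrings

theorem disconnected_contributions_factorize_general {N Nc : ℕ} {h : Fin N → ℝ}
    {V : Fin Nc → QubitOp N} {Ψ : (Fin Nc → ℝ) → QubitState N}
    (hΨ : IsPerturbedEigenstate h V Ψ) (hgap : ∀ s ≠ 0, freeEnergy h s ≠ freeEnergy h 0)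
    {S : Finset (Fin N)} {kA kB : Fin Nc → ℕ} (hA : ∀ i, kA i ≠ 0 → V i ∈ localOps S)
    (hB : ∀ i, kB i ≠ 0 → V i ∈ localOps Sᶜ) (hne : Vpow V (kA + kB) *ᵥ ket 0 ≠ 0) {a b c : ℂ}
    (ha : IsContribution V Ψ kA a) (hb : IsContribution V Ψ kB b)
    (hc : IsContribution V Ψ (kA + kB) c) : c = a * b :=
  smul_left_injective ℂ hne (hc.symm.trans (ha.add hΨ hgap hA hB hb))

/-- with the perturbative coefficients `C_k` defined by
`(1/k!)∂^k_J Ψ(0) = C_k V^{·k}|0⟩`, disconnected contributions factorize: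
if `k = k_A + k_B` with `k_A, k_B` nonzero multi-indices of disjoint supports
(no qubit is acted on non-trivially both by an activated `V_i` of `k_A` and by one of `k_B`),
then `C_k = C_{k_A} · C_{k_B}`. -/
theorem disconnected_contributions_factorize {Nq Nc : ℕ} (hNq : 1 ≤ Nq) (hNc : 1 ≤ Nc)
    (h : Fin Nq → ℝ) (hpos : ∀ n, 0 < h n)
    (Vf : Fin Nc → Fin Nq → Fin 4)
    (Ψ : (Fin Nc → ℝ) → (Fin Nq → Fin 2) → ℂ)
    (E : (Fin Nc → ℝ) → ℝ)
    (Unb : Set (Fin Nc → ℝ)) (hUnb : Unb ∈ nhds (0 : Fin Nc → ℝ))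
    (hΨan : ∀ J ∈ Unb, AnalyticAt ℝ Ψ J)
    (hEan : ∀ J ∈ Unb, AnalyticAt ℝ E J)
    (heig : ∀ J ∈ Unb,
      ((-∑ n : Fin Nq, ((h n : ℝ) : ℂ) • pauliTensor (fun q => if q = n then (3 : Fin 4) else 0)) +
        ∑ i : Fin Nc, ((J i : ℝ) : ℂ) • pauliTensor (Vf i)).mulVec (Ψ J) = ((E J : ℝ) : ℂ) • Ψ J)
    (hnorm : ∀ J ∈ Unb, (∑ x, Complex.normSq (Ψ J x)) = 1)
    (hreal : ∀ J ∈ Unb, (Ψ J (fun _ => 0)).im = 0 ∧ 0 < (Ψ J (fun _ => 0)).re)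
    (hΨ0 : Ψ 0 = ket (fun _ => 0))
    (C : (Fin Nc → ℕ) → ℝ)
    (hC : ∀ k : Fin Nc → ℕ,
      (∏ i, (Nat.factorial (k i) : ℝ))⁻¹ • iterPDeriv k Ψ 0
        = ((C k : ℝ) : ℂ) • (Vpow (fun i => pauliTensor (Vf i)) k).mulVec (ket (fun _ => 0)))
    (kA kB : Fin Nc → ℕ) (hkA : kA ≠ 0) (hkB : kB ≠ 0)
    (hdisj : ∀ q : Fin Nq,
      ¬((∃ i, kA i ≠ 0 ∧ Vf i q ≠ 0) ∧ (∃ i, kB i ≠ 0 ∧ Vf i q ≠ 0))) :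
    C (kA + kB) = C kA * C kB := by
  have eigenstate : IsPerturbedEigenstate h (fun i => pauliTensor (Vf i)) Ψ :=
    { analyticAt := hΨan 0 (mem_of_mem_nhds hUnb)
      zero := hΨ0
      eigenvector := by filter_upwards [hUnb] with J hJ using ⟨E J, heig J hJ⟩
      sum_normSq := by filter_upwards [hUnb] with J hJ using hnorm J hJ
      pos := by
        filter_upwards [hUnb] with J hJ
        exact Complex.pos_iff.mpr ⟨(hreal J hJ).2, (hreal J hJ).1.symm⟩ }
  have gap (s : Fin Nq → Fin 2) (hs : s ≠ 0) : freeEnergy h s ≠ freeEnergy h 0 :=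
    (freeEnergy_zero_lt hpos hs).ne'
  obtain ⟨S, local_A, local_B⟩ := exists_mem_localOps_of_disjoint hdisj
  have ket_ne_zero : (ket 0 : QubitState Nq) ≠ 0 := by simp [ket_eq_single]
  have product_ne_zero := Vpow_mulVec_ne_zero
    (fun i => .of_mul_eq_one _ (pauliTensor_mul_self (Vf i))) (kA + kB) ket_ne_zero
  exact_mod_cast disconnected_contributions_factorize_general eigenstate gap local_A local_B
    product_ne_zero (hC kA) (hC kB) (hC (kA + kB))
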